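/- Ree's shuffle identity: Let d ≥ 1 and let X : [0,1] → ℝ^d be a path whose coordinate functions X_1, …, X_d are continuously differentiable. Extend w ↦ σ(X)_w linearly to a linear functional σ(X) on ℝ⟨1, …, d⟩. Then σ(X) is an algebra homomorphism from the shuffle algebra (ℝ⟨1, …, d⟩, ⧢) to ℝ: for all words u and v, σ(X)(u ⧢ v) = σ(X)_u · σ(X)_v. -/

import Mathlib

/-- The signature coefficient of the path `X` over `[a,b]` at a word `w`:
for `w = i₁ ⋯ i_k`, it is the iterated integral
`∫_{a < t₁ < ⋯ < t_k < b} X_{i₁}'(t₁) ⋯ X_{i_k}'(t_k)`, and `1` for the empty word. -/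
noncomputable def sig {d : ℕ} (X : ℝ → Fin d → ℝ) (a b : ℝ) : List (Fin d) → ℝ
  | [] => 1
  | i :: w => ∫ t in a..b, deriv (fun s => X s i) t * sig X t b w

/-- The shuffle product of two words, as an element of the free vector space
`ℝ⟨1,…,d⟩` with basis the words over `{1,…,d}`.  It is determined recursively by
`e ⧢ w = w ⧢ e = w` and `(u·a) ⧢ (v·b) = (u ⧢ (v·b))·a + ((u·a) ⧢ v)·b`. -/
noncomputable def shufW {d : ℕ} : List (Fin d) → List (Fin d) → (List (Fin d) →₀ ℝ)
  | u, v =>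
    match hu : u.reverse, hv : v.reverse with
    | [], _ => Finsupp.single v 1
    | _ :: _, [] => Finsupp.single u 1
    | a :: u', b :: v' =>
        Finsupp.mapDomain (· ++ [a]) (shufW u'.reverse (v'.reverse ++ [b]))
          + Finsupp.mapDomain (· ++ [b]) (shufW (u'.reverse ++ [a]) v'.reverse)
termination_by u v => u.length + v.length
decreasing_by
  all_goals
    (have h1 : u.length = u'.length + 1 := by
        have := congrArg List.length hu; simpa using this
     have h2 : v.length = v'.length + 1 := by
        have := congrArg List.length hv; simpa using this
     simp [h1, h2] <;> omega)

/-- The bilinear extension of the shuffle product to the free vector space `ℝ⟨1,…,d⟩`. -/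
noncomputable def shuffleF {d : ℕ} (f g : List (Fin d) →₀ ℝ) : List (Fin d) →₀ ℝ :=
  f.sum fun u a => g.sum fun v b => (a * b) • shufW u v

/-- The linear extension of `w ↦ σ(X)_w` to a linear functional on `ℝ⟨1,…,d⟩`. -/
noncomputable def sigL {d : ℕ} (X : ℝ → Fin d → ℝ) (f : List (Fin d) →₀ ℝ) : ℝ :=
  f.sum fun w a => a * sig X 0 1 w

/-!
Write `σ_{a,b}` for the signature over `[a, b]`. It is an iterated integral whose outermost variable
belongs to the *first* letter: `σ_{a,b}(i · w) = ∫ t in a..b, X_i'(t) σ_{t,b}(w)`. Integration by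
parts for two such integrals gives
`σ_{a,b}(i · u) σ_{a,b}(j · v)
  = ∫ t in a..b, X_i'(t) σ_{t,b}(u) σ_{t,b}(j · v) + X_j'(t) σ_{t,b}(i · u) σ_{t,b}(v)`,
which matches the recursion of the shuffle product on first letters. The shuffle product is defined
by recursion on last letters, but satisfies the first-letter recursion as well, because prepending
a letter commutes with appending one.
-/

open MeasureTheory Set

section Shuffle

variable {d : ℕ}

theorem shufW_nil_left (v : List (Fin d)) : shufW [] v = Finsupp.single v 1 := by
  rw [shufW.eq_def]
  rfl

theorem shufW_nil_right (u : List (Fin d)) : shufW u [] = Finsupp.single u 1 := by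
  rw [shufW.eq_def]
  dsimp only
  split <;> simp_all

theorem shufW_concat_concat (u v : List (Fin d)) (i j : Fin d) :
    shufW (u ++ [i]) (v ++ [j]) =
      Finsupp.mapDomain (· ++ [i]) (shufW u (v ++ [j])) +
        Finsupp.mapDomain (· ++ [j]) (shufW (u ++ [i]) v) := by
  rw [shufW.eq_def]
  dsimp only
  split
  case h_3 _ _ _ _ hu hv =>
    simp only [List.reverse_concat, List.cons.injEq] at hu hv
    obtain ⟨⟨rfl, rfl⟩, rfl, rfl⟩ := And.intro hu hv
    simp only [List.reverse_reverse]
  all_goals simp_all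

theorem mapDomain_cons_mapDomain_concat {α M : Type*} [AddCommMonoid M] (i j : α)
    (f : List α →₀ M) :
    Finsupp.mapDomain (List.cons i) (Finsupp.mapDomain (· ++ [j]) f) =
      Finsupp.mapDomain (· ++ [j]) (Finsupp.mapDomain (List.cons i) f) := by
  simp only [← Finsupp.mapDomain_comp]
  rfl

theorem shufW_cons_cons (u v : List (Fin d)) (i j : Fin d) :
    shufW (i :: u) (j :: v) =
      Finsupp.mapDomain (List.cons i) (shufW u (j :: v)) +
        Finsupp.mapDomain (List.cons j) (shufW (i :: u) v) := by
  induction u using List.reverseRecOn generalizing v with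
  | nil =>
    have shufW_singleton_concat (v : List (Fin d)) (l : Fin d) := shufW_concat_concat [] v i l
    simp only [List.nil_append, shufW_nil_left, Finsupp.mapDomain_single] at shufW_singleton_concat
    induction v using List.reverseRecOn with
    | nil =>
      rw [← List.nil_append [j], shufW_singleton_concat, add_comm]
      simp [shufW_nil_left, shufW_nil_right, Finsupp.mapDomain_single]
    | append_singleton v l ihv =>
      rw [← List.cons_append, shufW_singleton_concat, shufW_singleton_concat, ihv]
      simp only [shufW_nil_left, Finsupp.mapDomain_add, Finsupp.mapDomain_single,
        mapDomain_cons_mapDomain_concat, List.cons_append]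
      abel
  | append_singleton u k ihu =>
    induction v using List.reverseRecOn with
    | nil =>
      have shufW_concat_singleton (u : List (Fin d)) := shufW_concat_concat u [] k j
      simp only [List.nil_append, shufW_nil_right, Finsupp.mapDomain_single]
        at shufW_concat_singleton
      rw [← List.cons_append, shufW_concat_singleton, shufW_concat_singleton, ihu]
      simp only [shufW_nil_right, Finsupp.mapDomain_add, Finsupp.mapDomain_single,
        mapDomain_cons_mapDomain_concat, List.cons_append]
      abel
    | append_singleton v l ihv =>
      simp only [← List.cons_append, shufW_concat_concat]
      simp only [List.cons_append, ihu, ihv, Finsupp.mapDomain_add,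
        mapDomain_cons_mapDomain_concat]
      abel

end Shuffle

theorem integral_mul_integral_eq {f g : ℝ → ℝ} {a b : ℝ}
    (hf : IntervalIntegrable f volume a b) (hg : IntervalIntegrable g volume a b) :
    (∫ t in a..b, f t) * ∫ t in a..b, g t =
      ∫ t in a..b, (f t * ∫ r in t..b, g r) + (∫ r in t..b, f r) * g t := by
  have hb : b ∈ uIcc a b := right_mem_uIcc
  let F (t : ℝ) := ∫ r in b..t, f r
  let G (t : ℝ) := ∫ r in b..t, g r
  have hF : AbsolutelyContinuousOnInterval F a b :=
    hf.absolutelyContinuousOnInterval_intervalIntegral hb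
  have hG : AbsolutelyContinuousOnInterval G a b :=
    hg.absolutelyContinuousOnInterval_intervalIntegral hb
  calc
    (∫ t in a..b, f t) * ∫ t in a..b, g t = -(F b * G b - F a * G a) := by
      simp [F, G, intervalIntegral.integral_symm a b]
    _ = -∫ t in a..b, deriv F t * G t + F t * deriv G t := by
      rw [hF.integral_deriv_mul_eq_sub hG]
    _ = -∫ t in a..b, f t * G t + F t * g t := by
      refine congrArg Neg.neg (intervalIntegral.integral_congr_ae ?_)
      filter_upwards [hf.ae_hasDerivAt_integral, hg.ae_hasDerivAt_integral] with t hft hgt ht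
      have ht_mem : t ∈ uIcc a b := uIoc_subset_uIcc ht
      rw [(hft ht_mem b hb).deriv, (hgt ht_mem b hb).deriv]
    _ = ∫ t in a..b, (f t * ∫ r in t..b, g r) + (∫ r in t..b, f r) * g t := by
      rw [← intervalIntegral.integral_neg]
      simp only [F, G, intervalIntegral.integral_symm _ b, neg_add, mul_neg, neg_mul, neg_neg]

section Signature

variable {d : ℕ} {X : ℝ → Fin d → ℝ} {a b : ℝ}

/-- The signature of `X` over `[a, b]` as a linear functional on the free vector space on words.
It is `sigL X` for `[0, 1]`; the endpoints vary because the left one moves in the induction. -/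
noncomputable def sigFunctional (X : ℝ → Fin d → ℝ) (a b : ℝ) : (List (Fin d) →₀ ℝ) →ₗ[ℝ] ℝ :=
  Finsupp.linearCombination ℝ (sig X a b)

theorem sigL_eq_sigFunctional (f : List (Fin d) →₀ ℝ) : sigL X f = sigFunctional X 0 1 f :=
  rfl

theorem sigFunctional_single (w : List (Fin d)) :
    sigFunctional X a b (Finsupp.single w 1) = sig X a b w := by
  simp [sigFunctional]

theorem continuousOn_sig (hX : ∀ i, IntervalIntegrable (deriv fun t => X t i) volume a b)
    (w : List (Fin d)) : ContinuousOn (fun t => sig X t b w) (uIcc a b) := by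
  induction w with
  | nil => exact continuousOn_const
  | cons i w ih =>
    exact intervalIntegral.continuousOn_primitive_interval_left
      ((intervalIntegrable_iff').mp ((hX i).mul_continuousOn ih))

theorem intervalIntegrable_deriv_mul_sig
    (hX : ∀ i, IntervalIntegrable (deriv fun t => X t i) volume a b) (i : Fin d)
    (w : List (Fin d)) :
    IntervalIntegrable (fun t => deriv (fun s => X s i) t * sig X t b w) volume a b :=
  (hX i).mul_continuousOn (continuousOn_sig hX w)

theorem sigFunctional_mapDomain_cons
    (hX : ∀ i, IntervalIntegrable (deriv fun t => X t i) volume a b) (i : Fin d)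
    (f : List (Fin d) →₀ ℝ) :
    sigFunctional X a b (Finsupp.mapDomain (List.cons i) f) =
      ∫ t in a..b, deriv (fun s => X s i) t * sigFunctional X t b f := by
  rw [sigFunctional, Finsupp.linearCombination_mapDomain]
  simp only [sigFunctional, Finsupp.linearCombination_apply, Finsupp.sum, Finset.mul_sum,
    Function.comp_apply, smul_eq_mul, mul_left_comm _ (f _)]
  rw [intervalIntegral.integral_finsetSum fun w _ =>
    (intervalIntegrable_deriv_mul_sig hX i w).const_mul (f w)]
  simp only [intervalIntegral.integral_const_mul, sig]

theorem sig_cons_mul_sig_cons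
    (hX : ∀ i, IntervalIntegrable (deriv fun t => X t i) volume a b) (i j : Fin d)
    (u v : List (Fin d)) :
    sig X a b (i :: u) * sig X a b (j :: v) =
      (∫ t in a..b, deriv (fun s => X s i) t * (sig X t b u * sig X t b (j :: v))) +
        ∫ t in a..b, deriv (fun s => X s j) t * (sig X t b (i :: u) * sig X t b v) := by
  have integrable (k : Fin d) (w w' : List (Fin d)) : IntervalIntegrable
      (fun t => deriv (fun s => X s k) t * (sig X t b w * sig X t b w')) volume a b :=
    (hX k).mul_continuousOn ((continuousOn_sig hX w).mul (continuousOn_sig hX w'))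
  rw [← intervalIntegral.integral_add (integrable i u (j :: v)) (integrable j (i :: u) v)]
  simp only [sig]
  rw [integral_mul_integral_eq (intervalIntegrable_deriv_mul_sig hX i u)
    (intervalIntegrable_deriv_mul_sig hX j v)]
  simp only [mul_assoc, mul_left_comm]

end Signature

theorem ree_shuffle_identity_general {d : ℕ} {X : ℝ → Fin d → ℝ} {a b : ℝ}
    (hX : ∀ i, AbsolutelyContinuousOnInterval (fun t => X t i) a b) (u v : List (Fin d)) :
    sigFunctional X a b (shufW u v) = sig X a b u * sig X a b v := by
  induction u generalizing v a with
  | nil => simp only [shufW_nil_left, sigFunctional_single, sig, one_mul]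
  | cons i u ihu =>
    induction v generalizing a with
    | nil => simp only [shufW_nil_right, sigFunctional_single, sig, mul_one]
    | cons j v ihv =>
      have hX_deriv (i : Fin d) := (hX i).intervalIntegrable_deriv
      have hX_tail {t : ℝ} (ht : t ∈ uIcc a b) (i : Fin d) :
          AbsolutelyContinuousOnInterval (fun t => X t i) t b :=
        (hX i).mono (uIcc_subset_uIcc_right ht)
      rw [shufW_cons_cons, map_add, sigFunctional_mapDomain_cons hX_deriv,
        sigFunctional_mapDomain_cons hX_deriv, sig_cons_mul_sig_cons hX_deriv]
      congr 1 <;> refine intervalIntegral.integral_congr fun t ht => ?_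
      · simp only [ihu (hX_tail ht)]
      · simp only [ihv (hX_tail ht)]

/-- **Ree's shuffle identity.**  For a path `X : [0,1] → ℝ^d` with continuously
differentiable coordinates, the linear extension of the signature is an algebra homomorphism
from the shuffle algebra to `ℝ`: for all words `u, v`, `σ(X)(u ⧢ v) = σ(X)_u * σ(X)_v`. -/
theorem ree_shuffle_identity (d : ℕ) (hd : 1 ≤ d) (X : ℝ → Fin d → ℝ)
    (hX : ∀ i, ContDiff ℝ 1 fun t => X t i) (u v : List (Fin d)) :
    sigL X (shufW u v) = sig X 0 1 u * sig X 0 1 v := by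
  rw [sigL_eq_sigFunctional]
  exact ree_shuffle_identity_general
    (fun i => (hX i).contDiffOn.absolutelyContinuousOnInterval) u v
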